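/- There is an absolute constant c > 0 such that for all positive integers n and k, the number of k-queues on the vertex set {1,…,n} is at most c^(k·n). -/

import Mathlib

/-!
An edge set on `{1, …, n}` is a queue exactly when it is a chain in the product order on
`{1, …, n}²`. Let `a` and `b` be the largest elements of the two factors of a grid. A chain cannot
meet both the last column and the last row outside the corner `(a, b)`, since `(a, y)` and `(x, b)`
are incomparable for `x < a` and `y < b`. So deleting the corner leaves a chain in the grid without
its last column or in the grid without its last row, and the number `f p q` of chains in a `p × q`
grid satisfies `f p q ≤ 2 * (f (p - 1) q + f p (q - 1))`. This gives `f n n ≤ 4 ^ (n + n) = 16 ^ n`,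
and a `k`-queue is a union of `k` queues.
-/

/-- Two edges `(v,w)` and `(x,y)` (each with first coordinate ≤ second) of an
ordered graph are nested (one is nested inside the other). -/
def Nested (e f : ℕ × ℕ) : Prop :=
  (e.1 < f.1 ∧ f.2 < e.2) ∨ (f.1 < e.1 ∧ e.2 < f.2)

/-- `E` is the edge set of an ordered graph on the vertex set `{1, …, n}`:
each edge is a pair `(v,w)` with `1 ≤ v ≤ w ≤ n` (loops allowed, no parallel edges). -/
def IsOrderedGraph (n : ℕ) (E : Finset (ℕ × ℕ)) : Prop :=
  ∀ e ∈ E, 1 ≤ e.1 ∧ e.1 ≤ e.2 ∧ e.2 ≤ n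

/-- An edge set is a queue if no two of its edges are nested. -/
def IsQueue (E : Finset (ℕ × ℕ)) : Prop :=
  ∀ e ∈ E, ∀ f ∈ E, ¬ Nested e f

/-- An edge set is a `k`-queue if it can be partitioned into at most `k` parts,
each of which is a queue. -/
def IsKQueue (k : ℕ) (E : Finset (ℕ × ℕ)) : Prop :=
  ∃ parts : Fin k → Finset (ℕ × ℕ),
    (∀ e ∈ E, ∃ i, e ∈ parts i) ∧
    (∀ i, parts i ⊆ E) ∧
    (∀ i j, i ≠ j → Disjoint (parts i) (parts j)) ∧
    (∀ i, IsQueue (parts i))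


/-- `kQueueCount n k` is the number of `k`-queues on the vertex set `{1, …, n}`:
the number of edge sets `E ⊆ {(v,w) : 1 ≤ v ≤ w ≤ n}` that can be partitioned
into at most `k` parts, each with no two nested edges. -/
noncomputable def kQueueCount (n k : ℕ) : ℕ :=
  {E : Finset (ℕ × ℕ) | IsOrderedGraph n E ∧ IsKQueue k E}.ncard

open Finset

section SetFamily

variable {α : Type*} [DecidableEq α]

lemma card_le_two_mul_card_of_erase_mem {𝒜 ℬ : Finset (Finset α)} (a : α)
    (h : ∀ s ∈ 𝒜, s.erase a ∈ ℬ) : #𝒜 ≤ 2 * #ℬ := by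
  have member_subset : 𝒜.memberSubfamily a ⊆ ℬ := fun s hs => by
    obtain ⟨hs, ha⟩ := mem_memberSubfamily.1 hs
    simpa [ha] using h _ hs
  have nonMember_subset : 𝒜.nonMemberSubfamily a ⊆ ℬ := fun s hs => by
    obtain ⟨hs, ha⟩ := mem_nonMemberSubfamily.1 hs
    simpa [ha] using h _ hs
  rw [← card_memberSubfamily_add_card_nonMemberSubfamily a 𝒜, two_mul]
  exact add_le_add (card_le_card member_subset) (card_le_card nonMember_subset)

lemma ncard_le_pow_of_exists_biUnion_eq {ι : Type*} [Fintype ι] {𝒜 : Finset (Finset α)}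
    {𝒞 : Set (Finset α)}
    (h : ∀ s ∈ 𝒞, ∃ parts : ι → Finset α, (∀ i, parts i ∈ 𝒜) ∧ univ.biUnion parts = s) :
    𝒞.ncard ≤ #𝒜 ^ Fintype.card ι := by
  classical
  let unions := (Fintype.piFinset fun _ : ι => 𝒜).image fun parts => univ.biUnion parts
  have subset_unions : 𝒞 ⊆ unions := fun s hs => by
    obtain ⟨parts, hparts, rfl⟩ := h s hs
    exact mem_coe.2 (mem_image_of_mem _ (Fintype.mem_piFinset.2 hparts))
  calc 𝒞.ncard ≤ (unions : Set (Finset α)).ncard := Set.ncard_le_ncard subset_unions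
    _ = #unions := Set.ncard_coe_finset unions
    _ ≤ #(Fintype.piFinset fun _ : ι => 𝒜) := card_image_le
    _ = #𝒜 ^ Fintype.card ι := by rw [Fintype.card_piFinset, prod_const, card_univ]

end SetFamily

section Chains

variable {γ : Type*} [LE γ]

open Classical in
/-- The chains for `≤` that are contained in a finite set, the empty chain included. -/
noncomputable def chainFinset (s : Finset γ) : Finset (Finset γ) :=
  {Q ∈ s.powerset | IsChain (· ≤ ·) (Q : Set γ)}

@[simp]
lemma mem_chainFinset {s Q : Finset γ} :
    Q ∈ chainFinset s ↔ Q ⊆ s ∧ IsChain (· ≤ ·) (Q : Set γ) := by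
  simp [chainFinset]

@[simp]
lemma chainFinset_empty : chainFinset (∅ : Finset γ) = {∅} := by
  ext Q
  simp +contextual

end Chains

section Grids

variable {α β : Type*} [Preorder α] [Preorder β] [DecidableEq α] [DecidableEq β]
  {s : Finset α} {t : Finset β} {a : α} {b : β}

lemma erase_subset_or_erase_subset_of_isChain {Q : Finset (α × β)}
    (hQ : IsChain (· ≤ ·) (Q : Set (α × β)))
    (hsub : Q ⊆ insert a s ×ˢ insert b t) (ha : ∀ x ∈ s, x < a) (hb : ∀ y ∈ t, y < b) :
    Q.erase (a, b) ⊆ s ×ˢ insert b t ∨ Q.erase (a, b) ⊆ insert a s ×ˢ t := by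
  by_contra! ⟨hcol, hrow⟩
  obtain ⟨y, hy, hay⟩ : ∃ y ∈ t, (a, y) ∈ Q := by
    obtain ⟨⟨x, y⟩, he, hnot⟩ := not_subset.1 hcol
    have := hsub (mem_of_mem_erase he)
    grind
  obtain ⟨x, hx, hxb⟩ : ∃ x ∈ s, (x, b) ∈ Q := by
    obtain ⟨⟨x, y⟩, he, hnot⟩ := not_subset.1 hrow
    have := hsub (mem_of_mem_erase he)
    grind
  rcases hQ.total hay hxb with hle | hle
  · exact (ha x hx).not_ge hle.1
  · exact (hb y hy).not_ge hle.2

lemma card_chainFinset_insert_product_insert_le (ha : ∀ x ∈ s, x < a) (hb : ∀ y ∈ t, y < b) :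
    #(chainFinset (insert a s ×ˢ insert b t)) ≤
      2 * (#(chainFinset (s ×ˢ insert b t)) + #(chainFinset (insert a s ×ˢ t))) := by
  have erase_mem : ∀ Q ∈ chainFinset (insert a s ×ˢ insert b t),
      Q.erase (a, b) ∈ chainFinset (s ×ˢ insert b t) ∪ chainFinset (insert a s ×ˢ t) := by
    intro Q hQ
    obtain ⟨hsub, hchain⟩ := mem_chainFinset.1 hQ
    have herase : IsChain (· ≤ ·) (↑(Q.erase (a, b)) : Set (α × β)) :=
      hchain.mono (erase_subset _ _)
    simpa only [mem_union, mem_chainFinset, herase, and_true] using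
      erase_subset_or_erase_subset_of_isChain hchain hsub ha hb
  calc #(chainFinset (insert a s ×ˢ insert b t))
      ≤ 2 * #(chainFinset (s ×ˢ insert b t) ∪ chainFinset (insert a s ×ˢ t)) :=
        card_le_two_mul_card_of_erase_mem (a, b) erase_mem
    _ ≤ 2 * (#(chainFinset (s ×ˢ insert b t)) + #(chainFinset (insert a s ×ˢ t))) :=
        Nat.mul_le_mul_left 2 (card_union_le _ _)

theorem card_chainFinset_product_le {α β : Type*} [LinearOrder α] [LinearOrder β]
    (s : Finset α) (t : Finset β) :
    #(chainFinset (s ×ˢ t)) ≤ 4 ^ (#s + #t) := by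
  induction s using Finset.induction_on_max generalizing t with
  | empty => simp [Nat.one_le_pow]
  | insert a s ha ihs =>
    induction t using Finset.induction_on_max with
    | empty => simp [Nat.one_le_pow]
    | insert b t hb iht =>
      have hs : #(insert a s) = #s + 1 := card_insert_of_notMem fun h => (ha a h).false
      have ht : #(insert b t) = #t + 1 := card_insert_of_notMem fun h => (hb b h).false
      calc #(chainFinset (insert a s ×ˢ insert b t))
          ≤ 2 * (#(chainFinset (s ×ˢ insert b t)) + #(chainFinset (insert a s ×ˢ t))) :=
            card_chainFinset_insert_product_insert_le ha hb
        _ ≤ 2 * (4 ^ (#s + #(insert b t)) + 4 ^ (#(insert a s) + #t)) := by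
            gcongr
            exact ihs _
        _ = 4 ^ (#(insert a s) + #(insert b t)) := by
            rw [hs, ht]
            ring

end Grids

section Queues

variable {n k : ℕ} {E : Finset (ℕ × ℕ)}

lemma not_nested_iff {e f : ℕ × ℕ} : ¬ Nested e f ↔ e ≤ f ∨ f ≤ e := by
  simp only [Nested, Prod.le_def]
  omega

lemma isQueue_iff_isChain : IsQueue E ↔ IsChain (· ≤ ·) (E : Set (ℕ × ℕ)) := by
  simp only [IsQueue, not_nested_iff]
  exact ⟨fun h e he f hf _ => h e he f hf, fun h e he f hf => h.total he hf⟩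

lemma IsOrderedGraph.subset_product (hE : IsOrderedGraph n E) : E ⊆ Icc 1 n ×ˢ Icc 1 n := by
  intro e he
  have := hE e he
  simp only [mem_product, mem_Icc]
  omega

lemma IsKQueue.exists_biUnion_eq (hE : IsKQueue k E) :
    ∃ parts : Fin k → Finset (ℕ × ℕ), (∀ i, IsQueue (parts i)) ∧ univ.biUnion parts = E := by
  obtain ⟨parts, hcover, hsub, -, hqueue⟩ := hE
  refine ⟨parts, hqueue, Subset.antisymm (biUnion_subset.2 fun i _ => hsub i) fun e he => ?_⟩
  simpa using hcover e he

theorem kQueueCount_le_card_chainFinset_pow (n k : ℕ) :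
    kQueueCount n k ≤ #(chainFinset (Icc 1 n ×ˢ Icc 1 n)) ^ k := by
  have exists_chains : ∀ E ∈ {E | IsOrderedGraph n E ∧ IsKQueue k E},
      ∃ parts : Fin k → Finset (ℕ × ℕ),
        (∀ i, parts i ∈ chainFinset (Icc 1 n ×ˢ Icc 1 n)) ∧ univ.biUnion parts = E := by
    rintro E ⟨hgraph, hE⟩
    obtain ⟨parts, hqueue, rfl⟩ := hE.exists_biUnion_eq
    refine ⟨parts, fun i => mem_chainFinset.2 ⟨?_, isQueue_iff_isChain.1 (hqueue i)⟩, rfl⟩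
    exact (subset_biUnion_of_mem parts (mem_univ i)).trans hgraph.subset_product
  simpa only [kQueueCount, Fintype.card_fin] using
    ncard_le_pow_of_exists_biUnion_eq exists_chains

end Queues

/-- There is an absolute constant `c > 0` such that the number of `k`-queues on
the vertex set `{1, …, n}` is at most `c ^ (k * n)`. -/
theorem kQueueCount_le_pow :
    ∃ c : ℕ, 0 < c ∧ ∀ n k : ℕ, 0 < n → 0 < k →
      kQueueCount n k ≤ c ^ (k * n) := by
  refine ⟨16, by norm_num, fun n k _ _ => ?_⟩
  calc kQueueCount n k
      ≤ #(chainFinset (Icc 1 n ×ˢ Icc 1 n)) ^ k := kQueueCount_le_card_chainFinset_pow n k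
    _ ≤ (4 ^ (#(Icc 1 n) + #(Icc 1 n))) ^ k := by
        gcongr
        exact card_chainFinset_product_le _ _
    _ = 16 ^ (k * n) := by
        rw [Nat.card_Icc, Nat.add_sub_cancel, ← two_mul, pow_mul, ← pow_mul, mul_comm n k]
        norm_num
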